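/- Let H be the Bethe–Salpeter matrix, let q₁, …, q_{k+1} ∈ ℂ^{2n} with n ≥ k+1, set Q_{2k+2} = [q₁, …, q_{k+1}, Π·conj(q₁), …, Π·conj(q_{k+1})] ∈ ℂ^{2n×(2k+2)} and Q_{2k} = [q₁, …, q_k, Π·conj(q₁), …, Π·conj(q_k)], and suppose Q_{2k+2}ᴴ·Γ₀·Q_{2k+2} = Γ_{2k+2} for some Γ_{2k+2} ∈ 𝔾_{2k+2}. Suppose H·Q_{2k} = Q_{2k+2}·T̃_{2k}, where T̃_{2k} ∈ ℂ^{(2k+2)×2k} is in ΓLan form with blocks T₁₁ (tridiagonal), T₂₁ (diagonal), t, and is unreduced, i.e. all subdiagonal entries T̃_{2k}(j+1, j), j = 1, …, k, are nonzero. Then K_{2k+2}(H, q₁) = Q_{2k+2}·R_{2k+2} for some nonsingular Π⁺-upper triangular matrix R_{2k+2} ∈ ℂ^{(2k+2)×(2k+2)}; in particular rank(K_{2k+2}(H, q₁)) = 2k+2. -/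

import Mathlib

open Matrix Complex

noncomputable section

/-- The matrix Π = [[0, I],[I, 0]]. -/
def PiMat (n : ℕ) : Matrix (Fin n ⊕ Fin n) (Fin n ⊕ Fin n) ℂ :=
  Matrix.fromBlocks 0 1 1 0

/-- The matrix Γ₀ = diag(I, −I). -/
def GammaZero (n : ℕ) : Matrix (Fin n ⊕ Fin n) (Fin n ⊕ Fin n) ℂ :=
  Matrix.fromBlocks 1 0 0 (-1)

/-- Entrywise complex conjugate of a matrix. -/
def mconj {α β : Type*} (M : Matrix α β ℂ) : Matrix α β ℂ :=
  M.map (starRingEnd ℂ)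

/-- The Bethe–Salpeter matrix H = [[A, B],[−conj B, −conj A]]. -/
def BSmat {n : ℕ} (A B : Matrix (Fin n) (Fin n) ℂ) :
    Matrix (Fin n ⊕ Fin n) (Fin n ⊕ Fin n) ℂ :=
  Matrix.fromBlocks A B (-(mconj B)) (-(mconj A))

/-- Membership in 𝔾_{2k}: Γ = diag(J, −J) with J diagonal with ±1 entries. -/
def IsGammaMat {k : ℕ} (Γ : Matrix (Fin k ⊕ Fin k) (Fin k ⊕ Fin k) ℂ) : Prop :=
  ∃ d : Fin k → ℂ, (∀ i, d i = 1 ∨ d i = -1) ∧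
    Γ = Matrix.fromBlocks (Matrix.diagonal d) 0 0 (-(Matrix.diagonal d))

/-- G is a Π^ε-matrix (ε = 1 : Π⁺, ε = −1 : Π⁻): G·Π_{2m} = ε·Π_{2n}·conj(G). -/
def IsPiMat {n m : ℕ} (ε : ℂ) (G : Matrix (Fin n ⊕ Fin n) (Fin m ⊕ Fin m) ℂ) : Prop :=
  G * PiMat m = ε • (PiMat n * mconj G)

/-- R is Π^ε-upper triangular. -/
def IsPiUpperTri {n m : ℕ} (ε : ℂ) (R : Matrix (Fin n ⊕ Fin n) (Fin m ⊕ Fin m) ℂ) : Prop :=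
  ∃ R₁ R₂ : Matrix (Fin n) (Fin m) ℂ,
    R = Matrix.fromBlocks R₁ R₂ (ε • mconj R₂) (ε • mconj R₁) ∧
    (∀ (i : Fin n) (j : Fin m), (j : ℕ) < (i : ℕ) → R₁ i j = 0) ∧
    (∀ (i : Fin n) (j : Fin m), (j : ℕ) ≤ (i : ℕ) → R₂ i j = 0)

/-- The i-th Π⁻-leading principal minor of a 2m×2m matrix. -/
def piLeadingMinor {m : ℕ} (M : Matrix (Fin m ⊕ Fin m) (Fin m ⊕ Fin m) ℂ)
    (i : ℕ) (h : i ≤ m) : ℂ :=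
  (Matrix.fromBlocks
    ((M.toBlocks₁₁).submatrix (Fin.castLE h) (Fin.castLE h))
    ((M.toBlocks₁₂).submatrix (Fin.castLE h) (Fin.castLE h))
    ((M.toBlocks₂₁).submatrix (Fin.castLE h) (Fin.castLE h))
    ((M.toBlocks₂₂).submatrix (Fin.castLE h) (Fin.castLE h))).det

/-- The k-th order Π-Krylov matrix
K_{2k}(H, q) = [q, Hq, …, H^{k−1}q, Π·conj(q), …, Π·conj(H)^{k−1}·conj(q)]. -/
def KrylovMat {n : ℕ} (H : Matrix (Fin n ⊕ Fin n) (Fin n ⊕ Fin n) ℂ)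
    (q : (Fin n ⊕ Fin n) → ℂ) (k : ℕ) :
    Matrix (Fin n ⊕ Fin n) (Fin k ⊕ Fin k) ℂ :=
  Matrix.of fun i j =>
    Sum.elim (fun l : Fin k => (H ^ (l : ℕ)).mulVec q i)
      (fun l : Fin k => (PiMat n).mulVec (((mconj H) ^ (l : ℕ)).mulVec (star q)) i) j

/-- The Π⁺-matrix [q₁, …, q_m, Π·conj(q₁), …, Π·conj(q_m)] built from the columns q. -/
def QfromCols {n m : ℕ} (q : Fin m → (Fin n ⊕ Fin n) → ℂ) :
    Matrix (Fin n ⊕ Fin n) (Fin m ⊕ Fin m) ℂ :=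
  Matrix.of fun i j =>
    Sum.elim (fun l : Fin m => q l i)
      (fun l : Fin m => (PiMat n).mulVec (star (q l)) i) j

/-- The (2k+2)×2k matrix in ΓLan form with blocks T₁₁ (tridiagonal), T₂₁ (diagonal)
and scalar t: rows 1..k are [T₁₁, −conj T₂₁], row k+1 is [t·e_kᵀ, 0], rows k+2..2k+1
are [T₂₁, −conj T₁₁] and row 2k+2 is [0, −conj(t)·e_kᵀ]. -/
def gammaLanForm (k : ℕ) (T11 T21 : Matrix (Fin k) (Fin k) ℂ) (t : ℂ) :
    Matrix (Fin (k + 1) ⊕ Fin (k + 1)) (Fin k ⊕ Fin k) ℂ :=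
  Matrix.of fun i j =>
    match i with
    | Sum.inl i' =>
        if h : (i' : ℕ) < k then
          Sum.elim (fun j' => T11 ⟨i', h⟩ j')
            (fun j' => -(starRingEnd ℂ (T21 ⟨i', h⟩ j'))) j
        else
          Sum.elim (fun j' : Fin k => if (j' : ℕ) + 1 = k then t else 0)
            (fun _ => 0) j
    | Sum.inr i' =>
        if h : (i' : ℕ) < k then
          Sum.elim (fun j' => T21 ⟨i', h⟩ j')
            (fun j' => -(starRingEnd ℂ (T11 ⟨i', h⟩ j'))) j
        else
          Sum.elim (fun _ => 0)
            (fun j' : Fin k => if (j' : ℕ) + 1 = k then -(starRingEnd ℂ t) else 0) j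

/-- T₁₁ is tridiagonal. -/
def IsTridiagonal {k : ℕ} (T : Matrix (Fin k) (Fin k) ℂ) : Prop :=
  ∀ i j : Fin k, ((i : ℕ) + 1 < (j : ℕ) ∨ (j : ℕ) + 1 < (i : ℕ)) → T i j = 0

/-- A skinny ΓQR factorization (for Π⁺-matrices) of G with respect to Γ. -/
def IsSkinnyGammaQR {n m : ℕ} (Γ : Matrix (Fin n ⊕ Fin n) (Fin n ⊕ Fin n) ℂ)
    (G Q : Matrix (Fin n ⊕ Fin n) (Fin m ⊕ Fin m) ℂ)
    (R : Matrix (Fin m ⊕ Fin m) (Fin m ⊕ Fin m) ℂ) : Prop :=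
  G = Q * R ∧ IsPiMat 1 Q ∧ IsGammaMat (Qᴴ * Γ * Q) ∧ IsPiUpperTri 1 R
/-- Restriction of a coefficient vector to the first k indices of each half. -/
def restr {k : ℕ} (x : Fin (k + 1) ⊕ Fin (k + 1) → ℂ) : Fin k ⊕ Fin k → ℂ :=
  fun i => x (Sum.map Fin.castSucc Fin.castSucc i)

/-- Krylov coefficient vectors. -/
def coef (k : ℕ) (T : Matrix (Fin (k + 1) ⊕ Fin (k + 1)) (Fin k ⊕ Fin k) ℂ) :
    ℕ → (Fin (k + 1) ⊕ Fin (k + 1) → ℂ)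
  | 0 => Pi.single (Sum.inl 0) 1
  | j + 1 => T.mulVec (restr (coef k T j))

theorem Q_restr {n k : ℕ} (q : Fin (k + 1) → (Fin n ⊕ Fin n) → ℂ)
    (x : Fin (k + 1) ⊕ Fin (k + 1) → ℂ)
    (h1 : x (Sum.inl (Fin.last k)) = 0) (h2 : x (Sum.inr (Fin.last k)) = 0) :
    (QfromCols (q ∘ Fin.castSucc)).mulVec (restr x) = (QfromCols q).mulVec x := by
  funext i
  simp [Matrix.mulVec, dotProduct, Fintype.sum_sum_type, Fin.sum_univ_castSucc, h1, h2,
    restr, QfromCols]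

theorem PiMat_mulVec {n : ℕ} (v : Fin n ⊕ Fin n → ℂ) (i : Fin n ⊕ Fin n) :
    (PiMat n).mulVec v i = v i.swap := by
  rcases i with i | i <;>
    simp [PiMat, Matrix.mulVec, dotProduct, Fintype.sum_sum_type, Matrix.one_apply]

theorem Q_inr {n m : ℕ} (q : Fin m → (Fin n ⊕ Fin n) → ℂ) (i : Fin n ⊕ Fin n) (l : Fin m) :
    QfromCols q i (Sum.inr l) = star (q l i.swap) := by
  simp only [QfromCols, Matrix.of_apply, Sum.elim_inr, PiMat_mulVec, Pi.star_apply]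

theorem Q_inl {n m : ℕ} (q : Fin m → (Fin n ⊕ Fin n) → ℂ) (i : Fin n ⊕ Fin n) (l : Fin m) :
    QfromCols q i (Sum.inl l) = q l i := rfl

theorem mulVec_sum_apply {n m : ℕ} (M : Matrix (Fin n ⊕ Fin n) (Fin m ⊕ Fin m) ℂ)
    (x : Fin m ⊕ Fin m → ℂ) (i : Fin n ⊕ Fin n) :
    M.mulVec x i = ∑ l, M i (Sum.inl l) * x (Sum.inl l) + ∑ l, M i (Sum.inr l) * x (Sum.inr l) := by
  simp [Matrix.mulVec, dotProduct, Fintype.sum_sum_type]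

theorem Q_pi {n m : ℕ} (q : Fin m → (Fin n ⊕ Fin n) → ℂ) (x : Fin m ⊕ Fin m → ℂ) :
    (PiMat n).mulVec (star ((QfromCols q).mulVec x)) =
      (QfromCols q).mulVec (fun i => star (x i.swap)) := by
  funext i
  rw [PiMat_mulVec, Pi.star_apply, mulVec_sum_apply, mulVec_sum_apply]
  simp [Q_inl, Q_inr, add_comm]

theorem mconj_mulVec_star {n : ℕ} (H : Matrix (Fin n ⊕ Fin n) (Fin n ⊕ Fin n) ℂ)
    (v : Fin n ⊕ Fin n → ℂ) : (mconj H).mulVec (star v) = star (H.mulVec v) := by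
  funext i
  simp [Matrix.mulVec, dotProduct, mconj]

theorem mconj_pow_star {n : ℕ} (H : Matrix (Fin n ⊕ Fin n) (Fin n ⊕ Fin n) ℂ)
    (q : Fin n ⊕ Fin n → ℂ) (l : ℕ) :
    ((mconj H) ^ l).mulVec (star q) = star ((H ^ l).mulVec q) := by
  induction l with
  | zero => simp
  | succ l ih =>
    rw [pow_succ', pow_succ', ← Matrix.mulVec_mulVec, ih, ← Matrix.mulVec_mulVec,
      mconj_mulVec_star]

theorem T_ll {k : ℕ} {T11 T21 : Matrix (Fin k) (Fin k) ℂ} {t : ℂ} (h : IsTridiagonal T11)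
    (i : Fin (k + 1)) (j : Fin k) (hij : (j : ℕ) + 1 < i) :
    gammaLanForm k T11 T21 t (Sum.inl i) (Sum.inl j) = 0 := by
  simp only [gammaLanForm, Matrix.of_apply, Sum.elim_inl]
  split_ifs with h1 h2
  · exact h _ _ (Or.inr hij)
  · omega
  · rfl

theorem T_rr {k : ℕ} {T11 T21 : Matrix (Fin k) (Fin k) ℂ} {t : ℂ} (h : IsTridiagonal T11)
    (i : Fin (k + 1)) (j : Fin k) (hij : (j : ℕ) + 1 < i) :
    gammaLanForm k T11 T21 t (Sum.inr i) (Sum.inr j) = 0 := by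
  simp only [gammaLanForm, Matrix.of_apply, Sum.elim_inr]
  split_ifs with h1 h2
  · rw [h _ _ (Or.inr hij)]; simp
  · omega
  · rfl

theorem T_lr {k : ℕ} {T11 T21 : Matrix (Fin k) (Fin k) ℂ} {t : ℂ} (h : T21.IsDiag)
    (i : Fin (k + 1)) (j : Fin k) (hij : (j : ℕ) < i) :
    gammaLanForm k T11 T21 t (Sum.inl i) (Sum.inr j) = 0 := by
  simp only [gammaLanForm, Matrix.of_apply, Sum.elim_inr]
  split_ifs with h1
  · rw [h (by intro e; rw [← e] at hij; simp at hij)]; simp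
  · rfl

theorem T_rl {k : ℕ} {T11 T21 : Matrix (Fin k) (Fin k) ℂ} {t : ℂ} (h : T21.IsDiag)
    (i : Fin (k + 1)) (j : Fin k) (hij : (j : ℕ) < i) :
    gammaLanForm k T11 T21 t (Sum.inr i) (Sum.inl j) = 0 := by
  simp only [gammaLanForm, Matrix.of_apply, Sum.elim_inl]
  split_ifs with h1
  · exact h (by intro e; rw [← e] at hij; simp at hij)
  · rfl

theorem coef_supp {k : ℕ} {T11 T21 : Matrix (Fin k) (Fin k) ℂ} {t : ℂ}
    (hT11 : IsTridiagonal T11) (hT21 : T21.IsDiag) (j : ℕ) :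
    (∀ i : Fin (k + 1), j < i → coef k (gammaLanForm k T11 T21 t) j (Sum.inl i) = 0) ∧
    (∀ i : Fin (k + 1), j ≤ i → coef k (gammaLanForm k T11 T21 t) j (Sum.inr i) = 0) := by
  induction j with
  | zero =>
    refine ⟨fun i hi => ?_, fun i hi => ?_⟩
    · have : i ≠ 0 := by rintro rfl; simp at hi
      simp [coef, this]
    · simp [coef]
  | succ j ih =>
    obtain ⟨ih1, ih2⟩ := ih
    refine ⟨fun i hi => ?_, fun i hi => ?_⟩
    · simp only [coef, Matrix.mulVec, dotProduct, Fintype.sum_sum_type, restr, Sum.map_inl,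
        Sum.map_inr]
      rw [Finset.sum_eq_zero, Finset.sum_eq_zero, add_zero]
      · intro l _
        by_cases hl : j ≤ l
        · rw [ih2 _ (by simpa using hl), mul_zero]
        · rw [T_lr hT21 _ _ (by omega), zero_mul]
      · intro l _
        by_cases hl : j < l
        · rw [ih1 _ (by simpa using hl), mul_zero]
        · rw [T_ll hT11 _ _ (by omega), zero_mul]
    · simp only [coef, Matrix.mulVec, dotProduct, Fintype.sum_sum_type, restr, Sum.map_inl,
        Sum.map_inr]
      rw [Finset.sum_eq_zero, Finset.sum_eq_zero, add_zero]
      · intro l _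
        by_cases hl : j ≤ l
        · rw [ih2 _ (by simpa using hl), mul_zero]
        · rw [T_rr hT11 _ _ (by omega), zero_mul]
      · intro l _
        by_cases hl : j < l
        · rw [ih1 _ (by simpa using hl), mul_zero]
        · rw [T_rl hT21 _ _ (by omega), zero_mul]

theorem coef_diag {k : ℕ} {T11 T21 : Matrix (Fin k) (Fin k) ℂ} {t : ℂ}
    (hT11 : IsTridiagonal T11) (hT21 : T21.IsDiag)
    (hunred : ∀ j : Fin k,
      gammaLanForm k T11 T21 t (Sum.inl j.succ) (Sum.inl j) ≠ 0) (j : ℕ) (hj : j < k + 1) :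
    coef k (gammaLanForm k T11 T21 t) j (Sum.inl ⟨j, hj⟩) ≠ 0 := by
  induction j with
  | zero => simp [coef]
  | succ j ih =>
    obtain ⟨ih1, ih2⟩ := coef_supp (t := t) hT11 hT21 j
    have ih := ih (by omega)
    simp only [coef, Matrix.mulVec, dotProduct, Fintype.sum_sum_type, restr, Sum.map_inl,
        Sum.map_inr]
    rw [Finset.sum_eq_single (⟨j, by omega⟩ : Fin k), Finset.sum_eq_zero, add_zero]
    · exact mul_ne_zero (hunred ⟨j, by omega⟩) ih
    · intro l _
      by_cases hl : j ≤ l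
      · rw [ih2 _ (by simpa using hl), mul_zero]
      · rw [T_lr hT21 _ _ (by simp; omega), zero_mul]
    · intro l _ hne
      have hne' : (l : ℕ) ≠ j := fun e => hne (Fin.ext e)
      by_cases hl : j < l
      · rw [ih1 _ (by simpa using hl), mul_zero]
      · rw [T_ll hT11 _ _ (by simp; omega), zero_mul]
    · simp

theorem coef_krylov {n k : ℕ} (H : Matrix (Fin n ⊕ Fin n) (Fin n ⊕ Fin n) ℂ)
    (q : Fin (k + 1) → (Fin n ⊕ Fin n) → ℂ)
    {T11 T21 : Matrix (Fin k) (Fin k) ℂ} {t : ℂ}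
    (hT11 : IsTridiagonal T11) (hT21 : T21.IsDiag)
    (hdec : H * QfromCols (q ∘ Fin.castSucc) = QfromCols q * gammaLanForm k T11 T21 t)
    (j : ℕ) (hj : j < k + 1) :
    (H ^ j).mulVec (q 0) = (QfromCols q).mulVec (coef k (gammaLanForm k T11 T21 t) j) := by
  induction j with
  | zero =>
    funext i
    simp [coef, QfromCols]
  | succ j ih =>
    obtain ⟨ih1, ih2⟩ := coef_supp (t := t) hT11 hT21 j
    rw [pow_succ', ← Matrix.mulVec_mulVec, ih (by omega), ← Q_restr _ _
      (ih1 _ (by simp; omega)) (ih2 _ (by simp; omega)), Matrix.mulVec_mulVec, hdec,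
      ← Matrix.mulVec_mulVec]
    rfl

/-- Ordering key for the interleaved order. -/
def key2 {m : ℕ} : Fin m ⊕ Fin m → ℕ := Sum.elim (fun i => 2 * i) (fun i => 2 * i + 1)

theorem key2_inj {m : ℕ} : Function.Injective (key2 (m := m)) := by
  rintro (a | a) (b | b) h <;> simp [key2] at h ⊢ <;> omega

theorem det_piUpper {m : ℕ} (M : Matrix (Fin m ⊕ Fin m) (Fin m ⊕ Fin m) ℂ)
    (hM : M.BlockTriangular key2) (hd : ∀ i, M i i ≠ 0) : IsUnit M.det := by
  rw [hM.det, isUnit_iff_ne_zero, Finset.prod_ne_zero_iff]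
  intro a ha
  obtain ⟨i, -, rfl⟩ := Finset.mem_image.1 ha
  haveI : Subsingleton {a : Fin m ⊕ Fin m // key2 a = key2 i} :=
    ⟨fun x y => Subtype.ext (key2_inj (x.2.trans y.2.symm))⟩
  rw [Matrix.det_eq_elem_of_subsingleton _ (⟨i, rfl⟩ : {a : Fin m ⊕ Fin m // key2 a = key2 i})]
  exact hd i

/-- from an unreduced ΓLan decomposition H·Q_{2k} = Q_{2k+2}·T̃_{2k} one
recovers a nonsingular Π⁺-upper triangular R with K_{2k+2}(H, q₁) = Q_{2k+2}·R; in
particular K_{2k+2}(H, q₁) has full column rank 2k+2. -/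
theorem stmt14 (n k : ℕ) (hk : 1 ≤ k) (hn : k + 1 ≤ n)
    (A B : Matrix (Fin n) (Fin n) ℂ) (hA : Aᴴ = A) (hB : Bᵀ = B)
    (q : Fin (k + 1) → (Fin n ⊕ Fin n) → ℂ)
    (hGam : IsGammaMat ((QfromCols q)ᴴ * GammaZero n * QfromCols q))
    (T11 T21 : Matrix (Fin k) (Fin k) ℂ) (t : ℂ)
    (hT11 : IsTridiagonal T11) (hT21 : T21.IsDiag)
    (hunred : ∀ j : Fin k,
      gammaLanForm k T11 T21 t (Sum.inl j.succ) (Sum.inl j) ≠ 0)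
    (hdec : BSmat A B * QfromCols (q ∘ Fin.castSucc) =
      QfromCols q * gammaLanForm k T11 T21 t) :
    ∃ R : Matrix (Fin (k + 1) ⊕ Fin (k + 1)) (Fin (k + 1) ⊕ Fin (k + 1)) ℂ,
      IsPiUpperTri 1 R ∧ IsUnit R.det ∧
      KrylovMat (BSmat A B) (q 0) (k + 1) = QfromCols q * R ∧
      (KrylovMat (BSmat A B) (q 0) (k + 1)).rank = 2 * (k + 1) := by
  set T := gammaLanForm k T11 T21 t with hT
  have hs := coef_supp (t := t) hT11 hT21
  rw [← hT] at hs
  let R : Matrix (Fin (k + 1) ⊕ Fin (k + 1)) (Fin (k + 1) ⊕ Fin (k + 1)) ℂ :=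
    Matrix.of fun i j => Sum.elim (fun l : Fin (k + 1) => coef k T l i)
      (fun l : Fin (k + 1) => star (coef k T l i.swap)) j
  have hU : IsUnit R.det := by
    apply det_piUpper
    · rintro (i | i) (j | j) h <;> simp only [key2, Sum.elim_inl, Sum.elim_inr] at h
      · exact (hs j).1 i (by omega)
      · simpa [R] using (hs j).2 i (by omega)
      · exact (hs j).2 i (by omega)
      · simpa [R] using (hs j).1 i (by omega)
    · rintro (i | i)
      · exact coef_diag hT11 hT21 hunred i i.2
      · simpa [R] using coef_diag hT11 hT21 hunred i i.2
  have hK : KrylovMat (BSmat A B) (q 0) (k + 1) = QfromCols q * R := by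
    ext i (j | j)
    · exact congrFun (coef_krylov _ q hT11 hT21 hdec j j.2) i
    · have h := Q_pi q (coef k T j)
      rw [← coef_krylov _ q hT11 hT21 hdec j j.2, ← mconj_pow_star] at h
      exact congrFun h i
  refine ⟨R, ⟨Matrix.of fun i j => coef k T j (Sum.inl i),
    Matrix.of fun i j => star (coef k T j (Sum.inr i)), ?_, ?_, ?_⟩, hU, hK, ?_⟩
  · ext (i | i) (j | j) <;> simp [R, mconj]
  · intro i j h
    exact (hs j).1 i h
  · intro i j h
    simpa using (hs j).2 i h
  · obtain ⟨d, hd, hG⟩ := hGam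
    have hd2 : ∀ i, d i * d i = 1 := by
      intro i
      rcases hd i with h | h <;> simp [h]
    have hGu : IsUnit ((QfromCols q)ᴴ * GammaZero n * QfromCols q) := by
      apply IsUnit.of_mul_eq_one ((QfromCols q)ᴴ * GammaZero n * QfromCols q)
      rw [hG, Matrix.fromBlocks_multiply]
      simp [hd2]
    have hRu : IsUnit R := (Matrix.isUnit_iff_isUnit_det R).2 hU
    have h1 := Matrix.rank_of_isUnit _ (hGu.mul hRu)
    rw [Matrix.mul_assoc, ← hK] at h1
    have h2 := Matrix.rank_mul_le_right ((QfromCols q)ᴴ * GammaZero n)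
      (KrylovMat (BSmat A B) (q 0) (k + 1))
    have h3 := Matrix.rank_le_card_width (KrylovMat (BSmat A B) (q 0) (k + 1))
    rw [h1] at h2
    simp only [Fintype.card_sum, Fintype.card_fin] at h2 h3
    omega


end
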